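/- arXiv:2411.19800 — 3 statements merged into one kernel-verified Lean document; each statement's English description precedes it below -/
import Mathlib

section
/- Let G be a tree and let G' be a graph obtained from G by removing at most k edges. Then 0 ≤ meg(G') ≤ meg(G) + 2k. -/
open SimpleGraph

variable {V : Type*}

/-- A pair of vertices `u, v` monitors edge `e` in `G` if `u` and `v` are connected
and `e` lies on every shortest path (walk of length `G.dist u v`) between them. -/
def monitors (G : SimpleGraph V) (u v : V) (e : Sym2 V) : Prop :=
  G.Reachable u v ∧ ∀ p : G.Walk u v, p.length = G.dist u v → e ∈ p.edges

/-- `M` is a monitoring edge-geodetic set of `G`. -/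
def IsMEGSet (G : SimpleGraph V) (M : Set V) : Prop :=
  ∀ e ∈ G.edgeSet, ∃ u ∈ M, ∃ v ∈ M, monitors G u v e

/-- The monitoring edge-geodetic number: minimum size of an MEG-set. -/
noncomputable def meg (G : SimpleGraph V) : ℕ :=
  sInf {n | ∃ M : Finset V, IsMEGSet G ↑M ∧ M.card = n}

lemma aux_suff {G : SimpleGraph V} (hG : G.IsAcyclic) {a b u v : V} (hab : G.Adj a b)
    (hu : (G.deleteEdges {s(a,b)}).Reachable a u) (hv : (G.deleteEdges {s(a,b)}).Reachable b v) :
    monitors G u v s(a,b) := by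
  have hle : G.deleteEdges {s(a,b)} ≤ G := G.deleteEdges_le _
  refine ⟨((hu.mono hle).symm.trans hab.reachable).trans (hv.mono hle), ?_⟩
  intro p _
  by_contra hp
  have h1 : (G.deleteEdges {s(a,b)}).Reachable u v := ⟨p.toDeleteEdge _ hp⟩
  have hb : G.IsBridge s(a,b) := (isAcyclic_iff_forall_edge_isBridge.1 hG) hab
  have := (isBridge_iff.1 hb)
  exact this ((hu.trans h1).trans hv.symm)

lemma aux_cover {G : SimpleGraph V} {a b w : V} (h : G.Reachable w a) :
    (G.deleteEdges {s(a,b)}).Reachable a w ∨ (G.deleteEdges {s(a,b)}).Reachable b w := by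
  obtain ⟨p⟩ := h
  induction p with
  | nil => exact Or.inl (Reachable.refl _)
  | @cons x y z hxy p ih =>
    by_cases he : s(x,y) = s(z,b)
    · rcases Sym2.eq_iff.1 he with ⟨rfl, rfl⟩ | ⟨rfl, rfl⟩
      · exact Or.inl (Reachable.refl _)
      · exact Or.inr (Reachable.refl _)
    · have hadj : (G.deleteEdges {s(z,b)}).Adj y x := by
        rw [adj_comm, deleteEdges_adj]
        exact ⟨hxy, he⟩
      exact ih.imp (fun h => h.trans hadj.reachable) (fun h => h.trans hadj.reachable)

lemma aux_nec {G : SimpleGraph V} (hG : G.IsAcyclic) {a b u v : V} (hab : G.Adj a b)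
    (h : monitors G u v s(a,b)) :
    ((G.deleteEdges {s(a,b)}).Reachable a u ∧ (G.deleteEdges {s(a,b)}).Reachable b v) ∨
    ((G.deleteEdges {s(a,b)}).Reachable a v ∧ (G.deleteEdges {s(a,b)}).Reachable b u) := by
  classical
  obtain ⟨hr, hm⟩ := h
  have hle : G.deleteEdges {s(a,b)} ≤ G := G.deleteEdges_le _
  have hn : ¬ (G.deleteEdges {s(a,b)}).Reachable u v := by
    rintro hq
    obtain ⟨q, hq⟩ := hq.exists_isPath
    obtain ⟨p, hp, hpl⟩ := hr.exists_path_of_dist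
    have hq' : (q.mapLe hle).IsPath := hq.mapLe hle
    have heq : p = q.mapLe hle :=
      congrArg Subtype.val (hG.path_unique ⟨p, hp⟩ ⟨q.mapLe hle, hq'⟩)
    have hmem := hm p hpl
    rw [heq, Walk.edges_mapLe_eq_edges] at hmem
    have := q.edges_subset_edgeSet hmem
    simp at this
  obtain ⟨p, hpl⟩ := hr.exists_walk_length_eq_dist
  have ha : a ∈ p.support := p.fst_mem_support_of_mem_edges (hm p hpl)
  have hua : G.Reachable u a := ⟨p.takeUntil a ha⟩
  have hva : G.Reachable v a := hr.symm.trans hua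
  rcases aux_cover (b := b) hua with h1 | h1 <;> rcases aux_cover (b := b) hva with h2 | h2
  · exact (hn (h1.symm.trans h2)).elim
  · exact Or.inl ⟨h1, h2⟩
  · exact Or.inr ⟨h2, h1⟩
  · exact (hn (h1.symm.trans h2)).elim

lemma aux_reach {G : SimpleGraph V} {s t : Set (Sym2 V)} {M : Set V} {a u : V} (hu : u ∈ M)
    (hM : ∀ e ∈ s, ∀ x ∈ e, x ∈ M) (h : (G.deleteEdges t).Reachable a u) :
    ∃ w ∈ M, ((G.deleteEdges s).deleteEdges t).Reachable a w := by
  obtain ⟨p⟩ := h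
  induction p with
  | nil => exact ⟨_, hu, Reachable.refl _⟩
  | @cons x y z hxy p ih =>
    by_cases he : s(x,y) ∈ s
    · exact ⟨x, hM _ he x (Sym2.mem_mk_left _ _), Reachable.refl _⟩
    · obtain ⟨w, hw, hr⟩ := ih hu
      refine ⟨w, hw, Reachable.trans (Adj.reachable ?_) hr⟩
      rw [deleteEdges_adj] at hxy
      rw [deleteEdges_adj, deleteEdges_adj]
      exact ⟨⟨hxy.1, he⟩, hxy.2⟩

/-- Removing at most `k` edges from a tree: `0 ≤ meg G' ≤ meg G + 2k`. -/
theorem tree_deleteEdges_le [Fintype V] (G : SimpleGraph V)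
    (hT : G.IsTree) (k : ℕ) (s : Finset (Sym2 V))
    (hs : ↑s ⊆ G.edgeSet) (hk : s.card ≤ k) :
    0 ≤ meg (G.deleteEdges ↑s) ∧ meg (G.deleteEdges ↑s) ≤ meg G + 2 * k := by
  classical
  refine ⟨Nat.zero_le _, ?_⟩
  have hA := hT.isAcyclic
  have hA' : (G.deleteEdges (↑s : Set (Sym2 V))).IsAcyclic := hA.anti (G.deleteEdges_le _)
  have hne : {n | ∃ M : Finset V, IsMEGSet G ↑M ∧ M.card = n}.Nonempty := by
    refine ⟨_, Finset.univ, ?_, rfl⟩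
    intro e
    induction e using Sym2.ind with
    | _ a b =>
      intro hab
      exact ⟨a, by simp, b, by simp, aux_suff hA hab (Reachable.refl _) (Reachable.refl _)⟩
  obtain ⟨M, hM, hMc⟩ := Nat.sInf_mem hne
  have hMc' : M.card = meg G := hMc
  set N : Finset V := M ∪ s.biUnion Sym2.toFinset with hN
  have hNs : ∀ e ∈ (↑s : Set (Sym2 V)), ∀ x ∈ e, x ∈ (↑N : Set V) := by
    intro e he x hx
    rw [hN, Finset.mem_coe, Finset.mem_union, Finset.mem_biUnion]
    exact Or.inr ⟨e, he, Sym2.mem_toFinset.2 hx⟩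
  have hNM : ∀ x ∈ (↑M : Set V), x ∈ (↑N : Set V) := fun x hx =>
    Finset.mem_coe.2 (Finset.mem_union_left _ hx)
  have hNmeg : IsMEGSet (G.deleteEdges ↑s) ↑N := by
    intro e
    induction e using Sym2.ind with
    | _ a b =>
      intro hab'
      have hab : G.Adj a b := G.deleteEdges_le _ hab'
      obtain ⟨u, hu, v, hv, hm⟩ := hM s(a,b) hab
      have key : ∀ u ∈ (↑M : Set V), ∀ v ∈ (↑M : Set V),
          (G.deleteEdges {s(a,b)}).Reachable a u → (G.deleteEdges {s(a,b)}).Reachable b v →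
          ∃ u ∈ (↑N : Set V), ∃ v ∈ (↑N : Set V), monitors (G.deleteEdges ↑s) u v s(a,b) := by
        intro u hu v hv h1 h2
        obtain ⟨u', hu', h1'⟩ := aux_reach (hNM u hu) hNs h1
        obtain ⟨v', hv', h2'⟩ := aux_reach (hNM v hv) hNs h2
        exact ⟨u', hu', v', hv', aux_suff hA' hab' h1' h2'⟩
      rcases aux_nec hA hab hm with ⟨h1, h2⟩ | ⟨h1, h2⟩
      · exact key u hu v hv h1 h2
      · exact key v hv u hu h1 h2
  have hcard : N.card ≤ M.card + s.card * 2 := by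
    refine (Finset.card_union_le _ _).trans (Nat.add_le_add_left ?_ _)
    refine Finset.card_biUnion_le_card_mul _ _ _ fun e _ => ?_
    rw [Sym2.card_toFinset]
    split_ifs <;> omega
  have hle : meg (G.deleteEdges ↑s) ≤ N.card := Nat.sInf_le ⟨N, hNmeg, rfl⟩
  omega
end

section
/- Let G be the m × n rectangular grid graph with m, n ≥ 3, and let e = uv be an edge with deg(u) = deg(v) = 3 (both endpoints are non-corner boundary vertices). Then meg(G \ {e}) = meg(G) = 2(m + n − 2). -/
open SimpleGraph

variable {V : Type*}

theorem aux_forced {V : Type*} (H : SimpleGraph V) (M : Set V) (hM : IsMEGSet H M) (v w : V)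
    (hvw : H.Adj v w)
    (h : ∀ x, H.Adj v x → x ≠ w → ∃ y, y ≠ v ∧ H.Adj w y ∧ H.Adj y x) : v ∈ M := by
  classical
  by_contra hv
  obtain ⟨a, ha, b, hb, hr, hp⟩ := hM s(v, w) (by simpa using hvw)
  -- key: a geodesic through v must avoid the edge after replacement
  obtain ⟨p, hpl⟩ := hr.exists_walk_length_eq_dist
  have hpath : p.IsPath := p.isPath_of_length_eq_dist hpl
  have hav : a ≠ v := fun e => hv (e ▸ ha)
  have hbv : b ≠ v := fun e => hv (e ▸ hb)
  have hvp : v ∈ p.support := p.fst_mem_support_of_mem_edges (hp p hpl)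
  -- split p at v
  obtain ⟨q, r, rfl⟩ := Walk.mem_support_iff_exists_append.1 hvp
  -- r is cons, q is concat
  have hqn : ¬ q.Nil := fun hn => hav hn.eq
  obtain ⟨z, hvz, r', rfl⟩ : ∃ z, ∃ (hz : H.Adj v z) (r' : H.Walk z b), r = Walk.cons hz r' := by
    cases r with
    | nil => exact absurd rfl hbv
    | cons hz r' => exact ⟨_, hz, r', rfl⟩
  obtain ⟨t, q', htv, rfl⟩ : ∃ t, ∃ (q' : H.Walk a t) (ht : H.Adj t v), q = q'.concat ht := by
    cases q with
    | nil => exact absurd rfl hav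
    | cons hz r' =>
      obtain ⟨t, q', ht, e⟩ := Walk.exists_cons_eq_concat hz r'
      exact ⟨t, q', ht, e⟩
  -- v not in supports of q', r'
  have hnd := hpath.support_nodup
  have hsup : ((q'.concat htv).append (Walk.cons hvz r')).support = q'.support ++ v :: r'.support := by
    simp [Walk.support_append, Walk.support_concat]
  rw [hsup] at hnd
  have hv1 : v ∉ q'.support := by
    intro hh
    rw [List.nodup_append] at hnd
    exact hnd.2.2 v hh v (by simp) rfl
  have hv2 : v ∉ r'.support := by
    rw [List.nodup_append] at hnd
    exact (List.nodup_cons.1 hnd.2.1).1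
  have htz : t ≠ z := by
    intro e
    rw [List.nodup_append] at hnd
    exact hnd.2.2 t (by simp) z (by simp) e
  have hy : ∃ y, y ≠ v ∧ H.Adj t y ∧ H.Adj y z := by
    have hmem := hp _ hpl
    have hc : w = t ∨ w = z := by
      simp only [Walk.edges_append, Walk.edges_concat, Walk.edges_cons, List.concat_eq_append,
        List.mem_append, List.mem_cons, List.mem_singleton] at hmem
      rcases hmem with (h1 | h1) | h1 | h1
      · exact absurd (q'.fst_mem_support_of_mem_edges h1) hv1
      · have : w ≠ v := hvw.ne'
        left
        rcases h1 with h1 | h1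
        · rcases Sym2.eq_iff.1 h1 with h2 | h2
          · exact absurd h2.2 this
          · exact h2.2
        · simp at h1
      · rcases Sym2.eq_iff.1 h1 with h2 | h2
        · exact Or.inr h2.2
        · exact absurd h2.2 hvw.ne'
      · exact absurd (r'.fst_mem_support_of_mem_edges h1) hv2
    rcases hc with rfl | rfl
    · exact h z hvz htz.symm
    · obtain ⟨y, h1, h2, h3⟩ := h t htv.symm htz
      exact ⟨y, h1, h3.symm, h2.symm⟩
  obtain ⟨y, hyv, hty, hyz⟩ := hy
  have hnew := hp ((q'.concat hty).append (Walk.cons hyz r')) (by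
    rw [← hpl]; simp)
  have := Walk.fst_mem_support_of_mem_edges _ hnew
  have hsup2 : ((q'.concat hty).append (Walk.cons hyz r')).support = q'.support ++ y :: r'.support := by
    simp [Walk.support_append, Walk.support_concat]
  rw [hsup2] at this
  simp at this
  rcases this with h1 | h1 | h1
  · exact hv1 h1
  · exact hyv h1.symm
  · exact hv2 h1

theorem aux_one {V : Type*} (H : SimpleGraph V) (a b : V) (p : H.Walk a b) (hp : p.length = 1) :
    s(a, b) ∈ p.edges := by
  cases p with
  | nil => simp at hp
  | cons h1 p1 =>
    cases p1 with
    | nil => simp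
    | cons h2 p2 => simp at hp

theorem aux_len {V : Type*} (H : SimpleGraph V) (f g : V → ℤ)
    (hfg : ∀ p q, H.Adj p q → |f p - f q| + |g p - g q| ≤ 1) (a b : V) (p : H.Walk a b) :
    |f a - f b| + |g a - g b| ≤ p.length := by
  induction p with
  | nil => simp
  | @cons a a' b h p ih =>
    have := hfg _ _ h
    push_cast [Walk.length_cons]
    have h1 := abs_sub_le (f a) (f a') (f b)
    have h2 := abs_sub_le (g a) (g a') (g b)
    linarith

theorem aux_edge {V : Type*} (H : SimpleGraph V) (f g : V → ℤ)
    (inj : ∀ p q, f p = f q → g p = g q → p = q)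
    (hfg : ∀ p q, H.Adj p q → |f p - f q| + |g p - g q| ≤ 1)
    (s t : V) (hst : f t = f s + 1) (hst' : g t = g s) (a b : V) (p : H.Walk a b)
    (hgb : g b = g s) (hfb : f t ≤ f b) (hga : g a = g s) (hfa : f a ≤ f s)
    (hl : (p.length : ℤ) ≤ f b - f a) : s(s, t) ∈ p.edges := by
  induction p with
  | nil => omega
  | @cons a a' b h p ih =>
    have h1 := hfg _ _ h
    have h2 := aux_len H f g hfg _ _ p
    rw [Walk.length_cons] at hl
    push_cast at hl
    have i1 := neg_le_abs (f a - f a')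
    have i2 := neg_le_abs (f a' - f b)
    have i3 := neg_le_abs (g a - g a')
    have i4 := le_abs_self (g a - g a')
    have i5 := abs_nonneg (g a' - g b)
    have i6 := abs_nonneg (g a - g a')
    have h3 : f a' = f a + 1 := by linarith
    have h4 : g a' = g s := by linarith
    rw [Walk.edges_cons, List.mem_cons]
    by_cases h5 : f a = f s
    · left
      rw [inj a s h5 hga, inj a' t (by omega) (by omega)]
    · right
      exact ih hgb hfb h4 (by omega) (by omega)

theorem aux_line {V : Type*} (H : SimpleGraph V) (f g : V → ℤ)
    (inj : ∀ p q, f p = f q → g p = g q → p = q)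
    (hfg : ∀ p q, H.Adj p q → |f p - f q| + |g p - g q| ≤ 1)
    (l : ℕ → V) (N : ℕ) (c : ℤ) (hf : ∀ k ≤ N, f (l k) = k) (hg : ∀ k ≤ N, g (l k) = c)
    (hl : ∀ k < N, H.Adj (l k) (l (k + 1))) (k : ℕ) (hk : k < N) :
    monitors H (l 0) (l N) s(l k, l (k + 1)) := by
  have hw : ∀ j ≤ N, ∃ p : H.Walk (l 0) (l j), p.length = j := by
    intro j
    induction j with
    | zero => intro _; exact ⟨Walk.nil, rfl⟩
    | succ j ih =>
      intro hj
      obtain ⟨p, hp⟩ := ih (by omega)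
      exact ⟨p.concat (hl j (by omega)), by simp [hp]⟩
  obtain ⟨p, hp⟩ := hw N le_rfl
  refine ⟨p.reachable, fun q hq => ?_⟩
  have hd : H.dist (l 0) (l N) ≤ N := (SimpleGraph.dist_le p).trans_eq hp
  have e0 := hf 0 (by omega)
  have eN := hf N le_rfl
  have ek := hf k (by omega)
  have ek1 := hf (k+1) (by omega)
  have g0 := hg 0 (by omega)
  have gN := hg N le_rfl
  have gk := hg k (by omega)
  have gk1 := hg (k+1) (by omega)
  apply aux_edge H f g inj hfg <;> push_cast at * <;> omega

/-- boundary -/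
def auxB (m n : ℕ) (p : Fin m × Fin n) : Prop :=
  p.1.val = 0 ∨ p.1.val + 1 = m ∨ p.2.val = 0 ∨ p.2.val + 1 = n

def auxC (m n : ℕ) (p : Fin m × Fin n) : Prop :=
  (p.1.val = 0 ∨ p.1.val + 1 = m) ∧ (p.2.val = 0 ∨ p.2.val + 1 = n)

theorem aux_adj (m n : ℕ) (p q : Fin m × Fin n) :
    ((SimpleGraph.pathGraph m).boxProd (SimpleGraph.pathGraph n)).Adj p q ↔
    ((p.1.val + 1 = q.1.val ∨ q.1.val + 1 = p.1.val) ∧ p.2.val = q.2.val) ∨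
    ((p.2.val + 1 = q.2.val ∨ q.2.val + 1 = p.2.val) ∧ p.1.val = q.1.val) := by
  rw [SimpleGraph.boxProd_adj, SimpleGraph.pathGraph_adj, SimpleGraph.pathGraph_adj, Fin.ext_iff,
    Fin.ext_iff]

theorem aux_card (m n : ℕ) (hm : 3 ≤ m) (hn : 3 ≤ n) [DecidablePred (auxB m n)] :
    (Finset.univ.filter (auxB m n)).card = 2 * (m + n - 2) := by
  have h1 := Finset.card_filter_add_card_filter_not (s := (Finset.univ : Finset (Fin m × Fin n)))
    (auxB m n)
  have h2 : (Finset.univ.filter (fun p => ¬ auxB m n p)).card = (m - 2) * (n - 2) := by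
    have : (Finset.range (m-2) ×ˢ Finset.range (n-2)).card = (m - 2) * (n - 2) := by simp
    rw [← this]
    apply Finset.card_bij (fun p _ => (p.1.val - 1, p.2.val - 1))
    · rintro ⟨⟨a, ha⟩, ⟨b, hb⟩⟩ h
      simp [auxB] at h ⊢
      omega
    · rintro ⟨⟨a, ha⟩, ⟨b, hb⟩⟩ h ⟨⟨a', ha'⟩, ⟨b', hb'⟩⟩ h' e
      simp [auxB] at h h' e ⊢
      omega
    · rintro ⟨a, b⟩ h
      simp at h
      refine ⟨(⟨a+1, by omega⟩, ⟨b+1, by omega⟩), ?_, ?_⟩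
      · simp [auxB]; omega
      · simp
  rw [h2] at h1
  simp only [Finset.card_univ, Fintype.card_prod, Fintype.card_fin] at h1
  obtain ⟨a, rfl⟩ := Nat.exists_eq_add_of_le hm
  obtain ⟨b, rfl⟩ := Nat.exists_eq_add_of_le hn
  have e1 : 3 + a - 2 = a + 1 := by omega
  have e2 : 3 + b - 2 = b + 1 := by omega
  have e3 : 3 + a + (3 + b) - 2 = a + b + 4 := by omega
  rw [e1, e2] at h1
  rw [e3]
  nlinarith

theorem aux_main (m n : ℕ) (hm : 3 ≤ m) (hn : 3 ≤ n) (H : SimpleGraph (Fin m × Fin n))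
    (hle : H ≤ (SimpleGraph.pathGraph m).boxProd (SimpleGraph.pathGraph n))
    (hH : ∀ p q, ((SimpleGraph.pathGraph m).boxProd (SimpleGraph.pathGraph n)).Adj p q →
      (¬ auxB m n p ∨ ¬ auxB m n q ∨ auxC m n p ∨ auxC m n q) → H.Adj p q) :
    meg H = 2 * (m + n - 2) := by
  classical
  have hadj : ∀ p q, H.Adj p q → _ := fun p q h => (aux_adj m n p q).1 (hle h)
  have hH' : ∀ (a b c d : ℕ) (ha : a < m) (hb : b < n) (hc : c < m) (hd : d < n),
      (((a + 1 = c ∨ c + 1 = a) ∧ b = d) ∨ ((b + 1 = d ∨ d + 1 = b) ∧ a = c)) →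
      (¬ (a = 0 ∨ a + 1 = m ∨ b = 0 ∨ b + 1 = n) ∨ ¬ (c = 0 ∨ c + 1 = m ∨ d = 0 ∨ d + 1 = n) ∨
      ((a = 0 ∨ a + 1 = m) ∧ (b = 0 ∨ b + 1 = n)) ∨ ((c = 0 ∨ c + 1 = m) ∧ (d = 0 ∨ d + 1 = n)))
      → H.Adj (⟨a, ha⟩, ⟨b, hb⟩) (⟨c, hc⟩, ⟨d, hd⟩) := by
    intro a b c d ha hb hc hd h1 h2
    exact hH _ _ ((aux_adj _ _ _ _).2 h1) h2
  have hfg : ∀ p q, H.Adj p q → |((p.1.val : ℤ)) - q.1.val| + |(p.2.val : ℤ) - q.2.val| ≤ 1 := by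
    intro p q h
    have := hadj p q h
    grind
  have inj : ∀ p q : Fin m × Fin n, (p.1.val : ℤ) = q.1.val → (p.2.val : ℤ) = q.2.val → p = q := by
    intro p q h1 h2
    ext <;> omega
  have hB : IsMEGSet H ↑(Finset.univ.filter (auxB m n)) := by
    have key : ∀ p q, H.Adj p q → (p.1.val + 1 = q.1.val ∨ p.2.val + 1 = q.2.val) →
        ∃ u ∈ {x | auxB m n x}, ∃ v ∈ {x | auxB m n x}, monitors H u v s(p, q) := by
      rintro ⟨⟨a, ha⟩, ⟨b, hb⟩⟩ ⟨⟨c, hc⟩, ⟨d, hd⟩⟩ h hor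
      have hh := hadj _ _ h
      simp only at hh hor
      by_cases hbd : auxB m n (⟨a, ha⟩, ⟨b, hb⟩) ∧ auxB m n (⟨c, hc⟩, ⟨d, hd⟩)
      · refine ⟨_, hbd.1, _, hbd.2, h.reachable, fun p hp => ?_⟩
        rw [SimpleGraph.dist_eq_one_iff_adj.2 h] at hp
        exact aux_one H _ _ p hp
      · simp only [auxB] at hbd
        rcases hor with hor | hor
        · obtain rfl : b = d := by omega
          subst hor
          let l : ℕ → Fin m × Fin n := fun k => (⟨min k (m-1), by omega⟩, ⟨b, hb⟩)
          have := aux_line H (fun p => (p.1.val : ℤ)) (fun p => (p.2.val : ℤ)) inj hfg l (m-1) b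
            (by intro k hk; simp only [l]; omega) (by intro k hk; rfl)
            (by intro k hk; apply hH' <;> omega) a (by omega)
          refine ⟨l 0, by simp [l, auxB], l (m-1), by simp [l, auxB]; omega, ?_⟩
          convert this using 4 <;> simp <;> omega
        · obtain rfl : a = c := by omega
          subst hor
          let l : ℕ → Fin m × Fin n := fun k => (⟨a, ha⟩, ⟨min k (n-1), by omega⟩)
          have := aux_line H (fun p => (p.2.val : ℤ)) (fun p => (p.1.val : ℤ))
            (fun p q h1 h2 => inj p q h2 h1) (fun p q h => by have := hfg p q h; rw [add_comm]; exact this) l (n-1) a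
            (by intro k hk; simp only [l]; omega) (by intro k hk; rfl)
            (by intro k hk; apply hH' <;> omega) b (by omega)
          refine ⟨l 0, by simp [l, auxB], l (n-1), by simp [l, auxB]; omega, ?_⟩
          convert this using 4 <;> simp <;> omega
    intro e
    induction e using Sym2.ind with
    | _ p q =>
      intro he
      rw [SimpleGraph.mem_edgeSet] at he
      have hc : ((Finset.univ.filter (auxB m n) : Finset (Fin m × Fin n)) : Set (Fin m × Fin n))
        = {x | auxB m n x} := by ext; simp
      rw [hc]
      have hh := hadj p q he
      by_cases h1 : p.1.val + 1 = q.1.val ∨ p.2.val + 1 = q.2.val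
      · exact key p q he h1
      · rw [Sym2.eq_swap]
        exact key q p he.symm (by omega)
  have hforce : ∀ M : Set (Fin m × Fin n), IsMEGSet H M → ∀ p, auxB m n p → p ∈ M := by
    rintro M hM ⟨⟨a, ha⟩, ⟨b, hb⟩⟩ hp
    simp only [auxB] at hp
    have main : ∀ (c d : ℕ) (hc : c < m) (hd : d < n),
        ((b = d ∧ (a = 0 ∧ c = 1 ∨ a + 1 = m ∧ c + 2 = m)) ∨
         (a = c ∧ (b = 0 ∧ d = 1 ∨ b + 1 = n ∧ d + 2 = n))) →
        ((⟨a, ha⟩, ⟨b, hb⟩) : Fin m × Fin n) ∈ M := by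
      intro c d hc hd h
      apply aux_forced H M hM (⟨a, ha⟩, ⟨b, hb⟩) (⟨c, hc⟩, ⟨d, hd⟩)
      · apply hH' <;> omega
      · rintro ⟨⟨x, hx⟩, ⟨y, hy⟩⟩ h1 h2
        have h3 := hadj _ _ h1
        simp only [ne_eq, Prod.mk.injEq, Fin.mk.injEq] at h2 h3
        refine ⟨(⟨x + c - a, by omega⟩, ⟨y + d - b, by omega⟩), ?_, ?_, ?_⟩
        · simp only [ne_eq, Prod.mk.injEq, Fin.mk.injEq]; omega
        · apply hH' <;> omega
        · apply hH' <;> omega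
    rcases hp with hp | hp | hp | hp
    · exact main 1 b (by omega) hb (by omega)
    · exact main (m-2) b (by omega) hb (by omega)
    · exact main a 1 ha (by omega) (by omega)
    · exact main a (n-2) ha (by omega) (by omega)
  rw [← aux_card m n hm hn]
  apply le_antisymm
  · exact Nat.sInf_le ⟨_, hB, rfl⟩
  · refine le_csInf (Set.nonempty_of_mem (⟨_, hB, rfl⟩ : _ ∈ {k | ∃ M : Finset (Fin m × Fin n),
      IsMEGSet H ↑M ∧ M.card = k})) ?_
    rintro k ⟨M, hM, rfl⟩
    apply Finset.card_le_card
    intro p hp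
    exact hforce M hM p (by simpa using hp)

theorem aux_deg (m n : ℕ) (hm : 3 ≤ m) (hn : 3 ≤ n) (u : Fin m × Fin n)
    (hu : (((SimpleGraph.pathGraph m).boxProd (SimpleGraph.pathGraph n)).neighborSet u).ncard = 3) :
    auxB m n u ∧ ¬ auxC m n u := by
  classical
  obtain ⟨⟨a, ha⟩, ⟨b, hb⟩⟩ := u
  constructor
  · by_contra hB
    simp only [auxB] at hB
    let S : Finset (Fin m × Fin n) := {(⟨a-1, by omega⟩, ⟨b, hb⟩), (⟨a+1, by omega⟩, ⟨b, hb⟩),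
      (⟨a, ha⟩, ⟨b-1, by omega⟩), (⟨a, ha⟩, ⟨b+1, by omega⟩)}
    have hS : S.card = 4 := by
      simp only [S]
      rw [Finset.card_insert_of_notMem, Finset.card_insert_of_notMem, Finset.card_insert_of_notMem,
        Finset.card_singleton] <;>
      simp only [Finset.mem_insert, Finset.mem_singleton, Prod.mk.injEq, Fin.mk.injEq] <;> omega
    have : (S : Set (Fin m × Fin n)) ⊆
        ((SimpleGraph.pathGraph m).boxProd (SimpleGraph.pathGraph n)).neighborSet
          (⟨a, ha⟩, ⟨b, hb⟩) := by
      rintro ⟨⟨x, hx⟩, ⟨y, hy⟩⟩ h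
      rw [SimpleGraph.mem_neighborSet, aux_adj]
      simp only [S, Finset.mem_coe, Finset.mem_insert, Finset.mem_singleton, Prod.mk.injEq, Fin.mk.injEq] at h
      simp only
      omega
    have := Set.ncard_le_ncard this (Set.toFinite _)
    rw [Set.ncard_coe_finset] at this
    omega
  · intro hC
    simp only [auxC] at hC
    let S : Finset (Fin m × Fin n) := {(⟨if a = 0 then 1 else a - 1, by split <;> omega⟩, ⟨b, hb⟩),
      (⟨a, ha⟩, ⟨if b = 0 then 1 else b - 1, by split <;> omega⟩)}
    have hS : S.card ≤ 2 := Finset.card_le_two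
    have : ((SimpleGraph.pathGraph m).boxProd (SimpleGraph.pathGraph n)).neighborSet
          (⟨a, ha⟩, ⟨b, hb⟩) ⊆ (S : Set (Fin m × Fin n)) := by
      rintro ⟨⟨x, hx⟩, ⟨y, hy⟩⟩ h
      rw [SimpleGraph.mem_neighborSet, aux_adj] at h
      simp only [S, Finset.mem_coe, Finset.mem_insert, Finset.mem_singleton, Prod.mk.injEq, Fin.mk.injEq]
      simp only at h
      split <;> split <;> omega
    have := Set.ncard_le_ncard this (Set.toFinite _)
    rw [Set.ncard_coe_finset] at this
    omega

/-- In the `m × n` grid (`m, n ≥ 3`), removing an edge both of whose endpoints have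
degree `3` does not change `meg`, which equals `2(m + n - 2)`. -/
theorem grid_deleteEdge_deg3_deg3 (m n : ℕ) (hm : 3 ≤ m) (hn : 3 ≤ n)
    (u v : Fin m × Fin n)
    (huv : ((SimpleGraph.pathGraph m).boxProd (SimpleGraph.pathGraph n)).Adj u v)
    (hu : (((SimpleGraph.pathGraph m).boxProd (SimpleGraph.pathGraph n)).neighborSet u).ncard = 3)
    (hv : (((SimpleGraph.pathGraph m).boxProd (SimpleGraph.pathGraph n)).neighborSet v).ncard = 3) :
    meg (((SimpleGraph.pathGraph m).boxProd (SimpleGraph.pathGraph n)).deleteEdges {s(u, v)})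
        = 2 * (m + n - 2) ∧
    meg ((SimpleGraph.pathGraph m).boxProd (SimpleGraph.pathGraph n)) = 2 * (m + n - 2) := by
  obtain ⟨hu1, hu2⟩ := aux_deg m n hm hn u hu
  obtain ⟨hv1, hv2⟩ := aux_deg m n hm hn v hv
  refine ⟨aux_main m n hm hn _ (SimpleGraph.deleteEdges_le _) ?_,
    aux_main m n hm hn _ le_rfl (fun p q h _ => h)⟩
  intro p q h hor
  rw [SimpleGraph.deleteEdges_adj]
  refine ⟨h, fun he => ?_⟩
  rw [Set.mem_singleton_iff] at he
  rcases Sym2.eq_iff.1 he with ⟨rfl, rfl⟩ | ⟨rfl, rfl⟩ <;> tauto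
end

section
/- Let G be the m × n rectangular grid graph with m, n ≥ 3, and let e = uv be an edge where u is a corner vertex (degree 2) and v has degree 3. Then meg(G \ {e}) = 2(m + n − 2) − 1. -/
open SimpleGraph

variable {V : Type*}

set_option linter.unusedSimpArgs false

theorem isMEG_iso {V W : Type*} {G : SimpleGraph V} {H : SimpleGraph W} (φ : G ≃g H)
    (M : Set V) (hM : IsMEGSet G M) : IsMEGSet H (φ '' M) := by
  intro e he
  induction e using Sym2.ind with
  | _ x y =>
    have hxy : G.Adj (φ.symm x) (φ.symm y) := φ.symm.map_adj_iff.2 he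
    obtain ⟨a, ha, b, hb, hr, hw⟩ := hM s(φ.symm x, φ.symm y) hxy
    refine ⟨φ a, ⟨a, ha, rfl⟩, φ b, ⟨b, hb, rfl⟩, hr.map φ.toHom, ?_⟩
    intro p hp
    have hd : H.dist (φ a) (φ b) = G.dist a b := by
      apply le_antisymm
      · obtain ⟨q, hq⟩ := hr.exists_walk_length_eq_dist
        rw [← hq, ← Walk.length_map φ.toHom q]
        exact dist_le _
      · have := dist_le ((p.map φ.symm.toHom).copy (φ.symm_apply_apply a) (φ.symm_apply_apply b))
        simpa [hp] using this
    have := hw ((p.map φ.symm.toHom).copy (φ.symm_apply_apply a) (φ.symm_apply_apply b))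
      (by simp [hp, hd])
    simp only [Walk.edges_copy, Walk.edges_map, List.mem_map] at this
    obtain ⟨e', he', heq⟩ := this
    have : e' = s(x, y) := by
      apply Sym2.map.injective φ.symm.injective
      exact heq
    rwa [← this]

theorem meg_le_iso {V W : Type*} {G : SimpleGraph V} {H : SimpleGraph W} (φ : G ≃g H) :
    {n | ∃ M : Finset V, IsMEGSet G ↑M ∧ M.card = n} ⊆
    {n | ∃ M : Finset W, IsMEGSet H ↑M ∧ M.card = n} := by
  classical
  rintro k ⟨M, hM, rfl⟩
  refine ⟨M.map φ.toEquiv.toEmbedding, ?_, by simp⟩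
  have := isMEG_iso φ _ hM
  rw [Finset.coe_map]
  exact this

theorem meg_iso {V W : Type*} {G : SimpleGraph V} {H : SimpleGraph W} (φ : G ≃g H) :
    meg G = meg H := by
  unfold meg
  rw [Set.Subset.antisymm (meg_le_iso φ) (meg_le_iso φ.symm)]

theorem meg_del_iso {V W : Type*} {G : SimpleGraph V} {H : SimpleGraph W} (φ : G ≃g H) (u v : V) :
    meg (G.deleteEdges {s(u, v)}) = meg (H.deleteEdges {s(φ u, φ v)}) := by
  apply meg_iso
  refine ⟨φ.toEquiv, ?_⟩
  intro a b
  have := φ.map_adj_iff (v := a) (w := b)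
  simp only [deleteEdges_adj, Set.mem_singleton_iff, Sym2.eq_iff]
  simp [this]

theorem mem_of_forced {V : Type*} {G : SimpleGraph V} {M : Set V} (hM : IsMEGSet G M) (x y : V)
    (hxy : G.Adj x y)
    (h : ∀ z, G.Adj x z → z ≠ y → ∃ w, w ≠ x ∧ G.Adj y w ∧ G.Adj w z) : x ∈ M := by
  classical
  by_contra hx
  obtain ⟨a, ha, b, hb, hr, hw⟩ := hM s(x, y) hxy
  obtain ⟨p, hp⟩ := hr.exists_walk_length_eq_dist
  have hpath := p.isPath_of_length_eq_dist hp
  have hmem := hw p hp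
  have hxs : x ∈ p.support := p.fst_mem_support_of_mem_edges hmem
  have hax : a ≠ x := fun h => hx (h ▸ ha)
  have hbx : b ≠ x := fun h => hx (h ▸ hb)
  obtain ⟨q, r, rfl⟩ := Walk.mem_support_iff_exists_append.1 hxs
  obtain ⟨z1, q', h1, rfl⟩ : ∃ z1, ∃ q' : G.Walk a z1, ∃ h1 : G.Adj z1 x, q = q'.concat h1 := by
    cases q using Walk.concatRec with
    | Hnil => exact absurd rfl hax
    | Hconcat q' h1 => exact ⟨_, q', h1, rfl⟩
  obtain ⟨z2, h2, r', rfl⟩ : ∃ z2, ∃ h2 : G.Adj x z2, ∃ r' : G.Walk z2 b, r = Walk.cons h2 r' := by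
    cases r with
    | nil => exact absurd rfl hbx
    | cons h2 r' => exact ⟨_, h2, r', rfl⟩
  rw [Walk.isPath_def] at hpath
  simp only [Walk.support_append, Walk.support_concat, Walk.support_cons, List.tail_cons,
    List.nodup_append, List.mem_append] at hpath
  have hq : x ∉ q'.support := by
    intro hh; exact hpath.1.2.2 x hh x (by simp) rfl
  have hr' : x ∉ r'.support := by
    intro hh; exact hpath.2.2 x (by simp) x hh rfl
  have hz : z1 ≠ z2 := by
    rintro rfl
    have := hpath.2.2 z1 (by simp) z1 (by simp); simp_all
  have hy : y = z1 ∨ y = z2 := by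
    simp only [Walk.edges_append, Walk.edges_concat, Walk.edges_cons, List.mem_append,
      List.mem_cons] at hmem
    have e1 : s(x, y) ∉ q'.edges := fun hh => hq (q'.fst_mem_support_of_mem_edges hh)
    have e2 : s(x, y) ∉ r'.edges := fun hh => hr' (r'.fst_mem_support_of_mem_edges hh)
    have := hxy.ne
    have := h1.ne
    have := h2.ne
    simp [e1, e2] at hmem
    tauto
  obtain ⟨w, hwx, hw1, hw2⟩ : ∃ w, w ≠ x ∧ G.Adj z1 w ∧ G.Adj w z2 := by
    rcases hy with rfl | rfl
    · exact h z2 h2 hz.symm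
    · obtain ⟨w, k1, k2, k3⟩ := h z1 h1.symm hz
      exact ⟨w, k1, k3.symm, k2.symm⟩
  have := hw (q'.append (Walk.cons hw1 (Walk.cons hw2 r'))) (by
    rw [← hp]; simp; omega)
  have := Walk.fst_mem_support_of_mem_edges _ this
  have := h1.ne
  simp [hq, hr', hwx.symm, Walk.mem_support_append_iff] at *
  simp_all

theorem lip_walk {V : Type*} {G : SimpleGraph V} (f : V → ℕ)
    (hf : ∀ x y, G.Adj x y → f y ≤ f x + 1) {x y : V} (p : G.Walk x y) :
    f y ≤ f x + p.length := by
  induction p with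
  | nil => simp
  | cons h p ih => have := hf _ _ h; simp; omega

theorem line_monitors {V : Type*} {G : SimpleGraph V} (f : V → ℕ) (L : ℕ → V) (N c : ℕ)
    (hf : ∀ x y, G.Adj x y → f y ≤ f x + 1) (hL : ∀ k ≤ N, f (L k) = k + c)
    (hadj : ∀ k < N, G.Adj (L k) (L (k+1)))
    (huniq : ∀ k < N, ∀ z, G.Adj (L k) z → f z = f (L k) + 1 → z = L (k+1)) :
    ∀ k < N, monitors G (L 0) (L N) s(L k, L (k+1)) := by
  have hw : ∀ k ≤ N, ∃ p : G.Walk (L 0) (L k), p.length = k := by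
    intro k
    induction k with
    | zero => exact fun _ => ⟨Walk.nil, rfl⟩
    | succ k ih =>
      intro hk
      obtain ⟨p, hp⟩ := ih (by omega)
      exact ⟨p.concat (hadj k (by omega)), by simp [hp]⟩
  have key : ∀ (x y : V) (p : G.Walk x y) (i : ℕ), i ≤ N → x = L i → y = L N →
      p.length + i ≤ N → ∀ k, i ≤ k → k < N → s(L k, L (k+1)) ∈ p.edges := by
    intro x y p
    induction p with
    | nil =>
      intro i hi hx hy _ k hk hk'
      have h1 := hL i hi
      have h2 := hL N le_rfl
      rw [← hx] at h1; rw [← hy] at h2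
      omega
    | @cons x z y h p ih =>
      intro i hi hx hy hlen k hk hk'
      simp only [Walk.length_cons] at hlen
      have h1 := hL i hi
      have h2 := hL N le_rfl
      have h3 := lip_walk f hf p
      have h4 := hf _ _ h
      subst hx
      rw [← hy] at h2
      have hz := huniq i (by omega) z h (by omega)
      rw [Walk.edges_cons, List.mem_cons]
      rcases Nat.eq_or_lt_of_le hk with rfl | hlt
      · left; rw [hz]
      · right; exact ih (i+1) (by omega) hz hy (by omega) k hlt hk'
  intro k hk
  obtain ⟨p, hp⟩ := hw N le_rfl
  refine ⟨⟨p⟩, fun q hq => key _ _ q 0 (by omega) rfl rfl ?_ k (by omega) hk⟩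
  have := dist_le p
  omega

theorem monitors_symm' {V : Type*} {G : SimpleGraph V} {M : Set V} {x y : V}
    (h : ∃ a ∈ M, ∃ b ∈ M, monitors G a b s(x, y)) : ∃ a ∈ M, ∃ b ∈ M, monitors G a b s(y, x) := by
  rwa [Sym2.eq_swap]

theorem H_adj (m n : ℕ) (u v : Fin m × Fin n) (hu1 : u.1.val = 0) (hu2 : u.2.val = 0)
    (hv1 : v.1.val = 1) (hv2 : v.2.val = 0) (x y : Fin m × Fin n) :
    (((pathGraph m).boxProd (pathGraph n)).deleteEdges {s(u, v)}).Adj x y ↔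
    ((x.1.val + 1 = y.1.val ∧ x.2.val = y.2.val ∧ (x.2.val = 0 → x.1.val ≠ 0)) ∨
     (y.1.val + 1 = x.1.val ∧ x.2.val = y.2.val ∧ (x.2.val = 0 → y.1.val ≠ 0)) ∨
     (x.2.val + 1 = y.2.val ∧ x.1.val = y.1.val) ∨ (y.2.val + 1 = x.2.val ∧ x.1.val = y.1.val)) := by
  simp only [deleteEdges_adj, boxProd_adj, pathGraph_adj, Set.mem_singleton_iff, Sym2.eq_iff,
    Prod.ext_iff, Fin.ext_iff]
  omega

theorem core (m n : ℕ) (hm : 3 ≤ m) (hn : 3 ≤ n) (u v : Fin m × Fin n)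
    (hu1 : u.1.val = 0) (hu2 : u.2.val = 0)
    (hv1 : v.1.val = 1) (hv2 : v.2.val = 0) :
    meg (((pathGraph m).boxProd (pathGraph n)).deleteEdges {s(u, v)}) = 2 * (m + n - 2) - 1 := by
  classical
  have hA := H_adj m n u v hu1 hu2 hv1 hv2
  generalize (((pathGraph m).boxProd (pathGraph n)).deleteEdges {s(u, v)}) = H at hA
  let B : Finset (Fin m × Fin n) := (Finset.univ \
    (Finset.Ioo (⟨0, by omega⟩ : Fin m) ⟨m-1, by omega⟩ ×ˢ
      Finset.Ioo (⟨0, by omega⟩ : Fin n) ⟨n-1, by omega⟩)).erase (⟨0, by omega⟩, ⟨1, by omega⟩)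
  have hB : ∀ x : Fin m × Fin n, x ∈ B ↔ (x.1.val = 0 ∨ x.1.val = m - 1 ∨ x.2.val = 0 ∨
      x.2.val = n - 1) ∧ ¬ (x.1.val = 0 ∧ x.2.val = 1) := by
    intro x
    have := x.1.isLt
    have := x.2.isLt
    simp only [B, Finset.mem_erase, Finset.mem_sdiff, Finset.mem_univ, true_and,
      Finset.mem_product, Finset.mem_Ioo, Fin.lt_def, Prod.ext_iff, Fin.ext_iff, ne_eq]
    omega
  have hcard : B.card = 2 * (m + n - 2) - 1 := by
    simp only [B]
    rw [Finset.card_erase_of_mem (by simp), Finset.card_sdiff_of_subset (Finset.subset_univ _)]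
    simp only [Finset.card_univ, Fintype.card_prod, Fintype.card_fin, Finset.card_product,
      Fin.card_Ioo]
    obtain ⟨a, rfl⟩ := Nat.exists_eq_add_of_le hm
    obtain ⟨b, rfl⟩ := Nat.exists_eq_add_of_le hn
    have e1 : 3 + a - 1 - 0 - 1 = a + 1 := by omega
    have e2 : 3 + b - 1 - 0 - 1 = b + 1 := by omega
    rw [e1, e2]
    have : (3 + a) * (3 + b) = (a+1)*(b+1) + (2 * a + 2 * b + 8) := by ring
    omega
  have hBM : IsMEGSet H ↑B := by
    have vert : ∀ x y : Fin m × Fin n, x.2.val + 1 = y.2.val → x.1.val = y.1.val →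
        ∃ a ∈ (B : Set (Fin m × Fin n)), ∃ b ∈ (B : Set (Fin m × Fin n)), monitors H a b s(x, y) := by
      rintro ⟨i, j⟩ ⟨i', j'⟩ h1 h2
      have := j'.isLt
      simp only at h1 h2
      let L : ℕ → Fin m × Fin n := fun k => (i, ⟨min k (n-1), by omega⟩)
      have := line_monitors (G := H) (fun x => x.2.val) L (n-1) 0
        (by intro x y h; rw [hA] at h; omega)
        (by intro k hk; simp [L]; omega)
        (by intro k hk; rw [hA]; (simp only [L, true_and, and_true, or_true, true_or, false_or, or_false, false_and, and_false, not_true_eq_false, not_false_eq_true, forall_const, ne_eq]) <;> omega)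
        (by intro k hk z h; rw [hA] at h; ((simp only [L, Prod.ext_iff, Fin.ext_iff, true_and, and_true, or_true, true_or, false_or, or_false, false_and, and_false, not_true_eq_false, not_false_eq_true, forall_const, ne_eq] at h ⊢) <;> omega))
        j.val (by omega)
      refine ⟨L 0, ?_, L (n-1), ?_, ?_⟩
      · rw [Finset.mem_coe, hB]; (simp only [L, true_and, and_true, or_true, true_or, false_or, or_false, false_and, and_false, not_true_eq_false, not_false_eq_true, forall_const, ne_eq]) <;> omega
      · rw [Finset.mem_coe, hB]; (simp only [L, true_and, and_true, or_true, true_or, false_or, or_false, false_and, and_false, not_true_eq_false, not_false_eq_true, forall_const, ne_eq]) <;> omega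
      · convert this using 2
        all_goals (simp only [L, Prod.ext_iff, Fin.ext_iff, true_and, and_true, or_true, true_or, false_or, or_false, false_and, and_false, not_true_eq_false, not_false_eq_true, forall_const, ne_eq]) <;> omega
    have horiz : ∀ x y : Fin m × Fin n, x.1.val + 1 = y.1.val → x.2.val = y.2.val →
        (x.2.val = 0 → x.1.val ≠ 0) →
        ∃ a ∈ (B : Set (Fin m × Fin n)), ∃ b ∈ (B : Set (Fin m × Fin n)), monitors H a b s(x, y) := by
      rintro ⟨i, j⟩ ⟨i', j'⟩ h1 h2 h3
      have := i'.isLt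
      simp only at h1 h2 h3
      by_cases hj1 : j.val = 1
      · let L : ℕ → Fin m × Fin n := fun k => (⟨min (k-1) (m-1), by omega⟩, ⟨min k 1, by omega⟩)
        have := line_monitors (G := H)
          (fun x => if x.1.val = 0 ∧ x.2.val = 0 then 0 else x.1.val + 1) L m 0
          (by intro x y h; rw [hA] at h; split_ifs <;> omega)
          (by intro k hk; simp only [L]; split_ifs <;> omega)
          (by intro k hk; rw [hA]; (simp only [L, true_and, and_true, or_true, true_or, false_or, or_false, false_and, and_false, not_true_eq_false, not_false_eq_true, forall_const, ne_eq]) <;> omega)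
          (by
            intro k hk z h; rw [hA] at h; simp only [L, Prod.ext_iff, Fin.ext_iff, true_and, and_true, or_true, true_or, false_or, or_false, false_and, and_false, not_true_eq_false, not_false_eq_true, forall_const, ne_eq] at h ⊢
            split_ifs at h ⊢ <;> intro h' <;> try omega
            all_goals exact h'.elim)
          (i.val + 1) (by omega)
        refine ⟨L 0, ?_, L m, ?_, ?_⟩
        · rw [Finset.mem_coe, hB]; (simp only [L, true_and, and_true, or_true, true_or, false_or, or_false, false_and, and_false, not_true_eq_false, not_false_eq_true, forall_const, ne_eq]) <;> omega
        · rw [Finset.mem_coe, hB]; (simp only [L, true_and, and_true, or_true, true_or, false_or, or_false, false_and, and_false, not_true_eq_false, not_false_eq_true, forall_const, ne_eq]) <;> omega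
        · convert this using 2
          all_goals (simp only [L, Prod.ext_iff, Fin.ext_iff, true_and, and_true, or_true, true_or, false_or, or_false, false_and, and_false, not_true_eq_false, not_false_eq_true, forall_const, ne_eq]) <;> omega
      · obtain ⟨c, hc, hci, hc1, hc0⟩ : ∃ c, c ≤ 1 ∧ c ≤ i.val ∧ (j.val = 0 → c = 1) ∧
            (j.val ≠ 0 → c = 0) := by
          by_cases hj : j.val = 0
          · exact ⟨1, by omega, by have := h3 hj; omega, by omega, by omega⟩
          · exact ⟨0, by omega, by omega, by omega, by omega⟩
        let L : ℕ → Fin m × Fin n := fun k => (⟨min (k+c) (m-1), by omega⟩, j)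
        have := line_monitors (G := H) (fun x => x.1.val) L (m-1-c) c
          (by intro x y h; rw [hA] at h; omega)
          (by intro k hk; simp [L]; omega)
          (by intro k hk; rw [hA]; (simp only [L, true_and, and_true, or_true, true_or, false_or, or_false, false_and, and_false, not_true_eq_false, not_false_eq_true, forall_const, ne_eq]) <;> omega)
          (by intro k hk z h; rw [hA] at h; ((simp only [L, Prod.ext_iff, Fin.ext_iff, true_and, and_true, or_true, true_or, false_or, or_false, false_and, and_false, not_true_eq_false, not_false_eq_true, forall_const, ne_eq] at h ⊢) <;> omega))
          (i.val - c) (by omega)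
        refine ⟨L 0, ?_, L (m-1-c), ?_, ?_⟩
        · rw [Finset.mem_coe, hB]; (simp only [L, true_and, and_true, or_true, true_or, false_or, or_false, false_and, and_false, not_true_eq_false, not_false_eq_true, forall_const, ne_eq]) <;> omega
        · rw [Finset.mem_coe, hB]; (simp only [L, true_and, and_true, or_true, true_or, false_or, or_false, false_and, and_false, not_true_eq_false, not_false_eq_true, forall_const, ne_eq]) <;> omega
        · convert this using 2
          all_goals (simp only [L, Prod.ext_iff, Fin.ext_iff, true_and, and_true, or_true, true_or, false_or, or_false, false_and, and_false, not_true_eq_false, not_false_eq_true, forall_const, ne_eq]) <;> omega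
    intro e he
    induction e using Sym2.ind with
    | _ x y =>
      rw [mem_edgeSet, hA] at he
      rcases he with ⟨h1, h2, h3⟩ | ⟨h1, h2, h3⟩ | ⟨h1, h2⟩ | ⟨h1, h2⟩
      · exact horiz x y h1 h2 h3
      · exact monitors_symm' (horiz y x h1 h2.symm (by omega))
      · exact vert x y h1 h2
      · exact monitors_symm' (vert y x h1 h2.symm)
  unfold meg
  apply le_antisymm
  · exact Nat.sInf_le ⟨B, hBM, hcard⟩
  · refine le_csInf ⟨_, B, hBM, rfl⟩ ?_
    rintro _ ⟨M, hM, rfl⟩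
    rw [← hcard]
    apply Finset.card_le_card
    rintro ⟨i, j⟩ hx
    rw [hB] at hx
    simp only at hx
    have hi := i.isLt
    have hj := j.isLt
    rw [← Finset.mem_coe]
    have first : ∀ c : Fin m, (i.val = 0 ∧ 2 ≤ j.val ∧ c.val = 1 ∨ i.val = m - 1 ∧ c.val = m - 2) →
        (i, j) ∈ (M : Set (Fin m × Fin n)) := by
      intro c hc
      refine mem_of_forced hM _ (c, j) (by rw [hA]; (try simp only [true_and, and_true, or_true, true_or, false_or, or_false, false_and, and_false, not_true_eq_false, not_false_eq_true, forall_const, ne_eq]) <;> omega) ?_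
      rintro ⟨z1, z2⟩ hz hzy
      have := z1.isLt
      rw [hA] at hz
      simp only [ne_eq, Prod.ext_iff, Fin.ext_iff] at hz hzy
      refine ⟨(c, z2), ?_, ?_, ?_⟩
      · (simp only [ne_eq, Prod.ext_iff, Fin.ext_iff, true_and, and_true, or_true, true_or, false_or, or_false, false_and, and_false, not_true_eq_false, not_false_eq_true, forall_const, ne_eq]) <;> omega
      · rw [hA]; (try simp only [true_and, and_true, or_true, true_or, false_or, or_false, false_and, and_false, not_true_eq_false, not_false_eq_true, forall_const, ne_eq]) <;> omega
      · rw [hA]; (try simp only [true_and, and_true, or_true, true_or, false_or, or_false, false_and, and_false, not_true_eq_false, not_false_eq_true, forall_const, ne_eq]) <;> omega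
    have second : ∀ c : Fin n, 1 ≤ i.val → (j.val = 0 ∧ c.val = 1 ∨ j.val = n - 1 ∧ c.val = n - 2) →
        (i, j) ∈ (M : Set (Fin m × Fin n)) := by
      intro c hi1 hc
      refine mem_of_forced hM _ (i, c) (by rw [hA]; (try simp only [true_and, and_true, or_true, true_or, false_or, or_false, false_and, and_false, not_true_eq_false, not_false_eq_true, forall_const, ne_eq]) <;> omega) ?_
      rintro ⟨z1, z2⟩ hz hzy
      have := z2.isLt
      rw [hA] at hz
      simp only [ne_eq, Prod.ext_iff, Fin.ext_iff] at hz hzy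
      refine ⟨(z1, c), ?_, ?_, ?_⟩
      · (simp only [ne_eq, Prod.ext_iff, Fin.ext_iff, true_and, and_true, or_true, true_or, false_or, or_false, false_and, and_false, not_true_eq_false, not_false_eq_true, forall_const, ne_eq]) <;> omega
      · rw [hA]; (try simp only [true_and, and_true, or_true, true_or, false_or, or_false, false_and, and_false, not_true_eq_false, not_false_eq_true, forall_const, ne_eq]) <;> omega
      · rw [hA]; (try simp only [true_and, and_true, or_true, true_or, false_or, or_false, false_and, and_false, not_true_eq_false, not_false_eq_true, forall_const, ne_eq]) <;> omega
    by_cases h00 : i.val = 0 ∧ j.val = 0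
    · refine mem_of_forced hM _ (i, ⟨1, by omega⟩) (by rw [hA]; (try simp only [true_and, and_true, or_true, true_or, false_or, or_false, false_and, and_false, not_true_eq_false, not_false_eq_true, forall_const, ne_eq]) <;> omega) ?_
      rintro ⟨z1, z2⟩ hz hzy
      rw [hA] at hz
      simp only [ne_eq, Prod.ext_iff, Fin.ext_iff] at hz hzy
      omega
    by_cases h0 : i.val = 0
    · exact first ⟨1, by omega⟩ (by (try simp only [true_and, and_true, or_true, true_or, false_or, or_false, false_and, and_false, not_true_eq_false, not_false_eq_true, forall_const, ne_eq]) <;> omega)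
    by_cases h1 : i.val = m - 1
    · exact first ⟨m - 2, by omega⟩ (by (try simp only [true_and, and_true, or_true, true_or, false_or, or_false, false_and, and_false, not_true_eq_false, not_false_eq_true, forall_const, ne_eq]) <;> omega)
    by_cases h2 : j.val = 0
    · exact second ⟨1, by omega⟩ (by omega) (by (try simp only [true_and, and_true, or_true, true_or, false_or, or_false, false_and, and_false, not_true_eq_false, not_false_eq_true, forall_const, ne_eq]) <;> omega)
    · exact second ⟨n - 2, by omega⟩ (by omega) (by (try simp only [true_and, and_true, or_true, true_or, false_or, or_false, false_and, and_false, not_true_eq_false, not_false_eq_true, forall_const, ne_eq]) <;> omega)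

def revIso (m n : ℕ) : ((pathGraph m).boxProd (pathGraph n)) ≃g
    ((pathGraph m).boxProd (pathGraph n)) where
  toEquiv := Equiv.prodCongr Fin.revPerm (Equiv.refl _)
  map_rel_iff' := by
    rintro ⟨a, b⟩ ⟨c, d⟩
    have := a.isLt
    have := c.isLt
    simp only [boxProd_adj, pathGraph_adj, Equiv.prodCongr_apply, Prod.map, Fin.revPerm_apply,
      Fin.val_rev, Equiv.refl_apply, Fin.ext_iff]
    omega

theorem core1 (m n : ℕ) (hm : 3 ≤ m) (hn : 3 ≤ n) (u v : Fin m × Fin n)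
    (huv : ((pathGraph m).boxProd (pathGraph n)).Adj u v)
    (hu1 : u.1.val = 0) (hu2 : u.2.val = 0) :
    meg (((pathGraph m).boxProd (pathGraph n)).deleteEdges {s(u, v)}) = 2 * (m + n - 2) - 1 := by
  have huv' := huv
  simp only [boxProd_adj, pathGraph_adj, Fin.ext_iff] at huv'
  by_cases h : v.1.val = 1
  · exact core m n hm hn u v hu1 hu2 h (by omega)
  · rw [meg_del_iso (boxProdComm _ _), core n m hn hm _ _ hu2 hu1
      (show v.2.val = 1 by omega) (show v.1.val = 0 by omega), Nat.add_comm]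

theorem core2 (m n : ℕ) (hm : 3 ≤ m) (hn : 3 ≤ n) (u v : Fin m × Fin n)
    (huv : ((pathGraph m).boxProd (pathGraph n)).Adj u v)
    (hu1 : u.1.val = 0 ∨ u.1.val = m - 1) (hu2 : u.2.val = 0) :
    meg (((pathGraph m).boxProd (pathGraph n)).deleteEdges {s(u, v)}) = 2 * (m + n - 2) - 1 := by
  rcases hu1 with h | h
  · exact core1 m n hm hn u v huv h hu2
  · rw [meg_del_iso (revIso m n)]
    refine core1 m n hm hn _ _ ((revIso m n).map_adj_iff.2 huv) ?_ hu2
    show (Fin.rev u.1).val = 0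
    rw [Fin.val_rev]; omega

theorem core3 (m n : ℕ) (hm : 3 ≤ m) (hn : 3 ≤ n) (u v : Fin m × Fin n)
    (huv : ((pathGraph m).boxProd (pathGraph n)).Adj u v)
    (hu1 : u.1.val = 0 ∨ u.1.val = m - 1) (hu2 : u.2.val = 0 ∨ u.2.val = n - 1) :
    meg (((pathGraph m).boxProd (pathGraph n)).deleteEdges {s(u, v)}) = 2 * (m + n - 2) - 1 := by
  rcases hu1 with h | h
  · rw [meg_del_iso (boxProdComm _ _), Nat.add_comm]
    exact core2 n m hn hm _ _ ((boxProdComm _ _).map_adj_iff.2 huv) hu2 h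
  · rw [meg_del_iso (revIso m n), meg_del_iso (boxProdComm _ _), Nat.add_comm]
    refine core2 n m hn hm _ _ ((boxProdComm _ _).map_adj_iff.2 ((revIso m n).map_adj_iff.2 huv))
      hu2 ?_
    show (Fin.rev u.1).val = 0
    rw [Fin.val_rev]; omega

theorem three_nbrs {V : Type*} [Finite V] {G : SimpleGraph V} {u a b c : V} (ha : G.Adj u a)
    (hb : G.Adj u b) (hc : G.Adj u c) (hab : a ≠ b) (hac : a ≠ c) (hbc : b ≠ c) :
    (G.neighborSet u).ncard ≠ 2 := by
  classical
  have h : ({a, b, c} : Set V) ⊆ G.neighborSet u := by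
    rintro x (rfl | rfl | rfl) <;> assumption
  have h2 := Set.ncard_le_ncard h (Set.toFinite _)
  have h3 : ({a, b, c} : Set V).ncard = 3 := Set.ncard_eq_three.2 ⟨a, b, c, hab, hac, hbc, rfl⟩
  omega

theorem corner1 (m n : ℕ) (hn : 3 ≤ n) (u : Fin m × Fin n)
    (hu : (((pathGraph m).boxProd (pathGraph n)).neighborSet u).ncard = 2) :
    u.1.val = 0 ∨ u.1.val = m - 1 := by
  obtain ⟨i, j⟩ := u
  have hi := i.isLt
  have hj := j.isLt
  by_contra hcon
  simp only [] at hcon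
  obtain ⟨k, hk⟩ : ∃ k : Fin n, j.val + 1 = k.val ∨ k.val + 1 = j.val := by
    by_cases h : j.val = 0
    · exact ⟨⟨1, by omega⟩, by (try simp only [true_and, and_true, or_true, true_or, false_or, or_false, false_and, and_false, not_true_eq_false, not_false_eq_true, forall_const, ne_eq]) <;> omega⟩
    · exact ⟨⟨j.val - 1, by omega⟩, by (try simp only [true_and, and_true, or_true, true_or, false_or, or_false, false_and, and_false, not_true_eq_false, not_false_eq_true, forall_const, ne_eq]) <;> omega⟩
  refine three_nbrs (a := (⟨i.val - 1, by omega⟩, j)) (b := (⟨i.val + 1, by omega⟩, j))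
    (c := (i, k)) ?_ ?_ ?_ ?_ ?_ ?_ hu
  all_goals (simp only [boxProd_adj, pathGraph_adj, Fin.ext_iff, Prod.ext_iff, true_and, and_true, or_true, true_or, false_or, or_false, false_and, and_false, not_true_eq_false, not_false_eq_true, forall_const, ne_eq]) <;> omega

/-- In the `m × n` grid (`m, n ≥ 3`), removing an edge joining a corner vertex
(degree `2`) to a vertex of degree `3` gives `meg = 2(m + n - 2) - 1`. -/
theorem grid_deleteEdge_corner (m n : ℕ) (hm : 3 ≤ m) (hn : 3 ≤ n)
    (u v : Fin m × Fin n)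
    (huv : ((SimpleGraph.pathGraph m).boxProd (SimpleGraph.pathGraph n)).Adj u v)
    (hu : (((SimpleGraph.pathGraph m).boxProd (SimpleGraph.pathGraph n)).neighborSet u).ncard = 2)
    (hv : (((SimpleGraph.pathGraph m).boxProd (SimpleGraph.pathGraph n)).neighborSet v).ncard = 3) :
    meg (((SimpleGraph.pathGraph m).boxProd (SimpleGraph.pathGraph n)).deleteEdges {s(u, v)})
        = 2 * (m + n - 2) - 1 := by
  refine core3 m n hm hn u v huv (corner1 m n hn u hu) ?_
  refine corner1 n m hm (u.2, u.1) ?_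
  rw [← hu, ← Set.ncard_image_of_injective _ (boxProdComm (pathGraph m) (pathGraph n)).injective]
  congr 1
  ext ⟨a, b⟩
  simp only [mem_neighborSet, Set.mem_image, Prod.exists, boxProdComm_apply]
  constructor
  · intro h
    exact ⟨b, a, (boxProdComm (pathGraph n) (pathGraph m)).map_adj_iff.2 h, rfl⟩
  · rintro ⟨c, d, h, h2⟩
    rw [← h2]
    exact (boxProdComm (pathGraph m) (pathGraph n)).map_adj_iff.2 h
end
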